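/- Let u : S¹ → ℝ be a smooth function with Fourier series u(θ) = Σ_{n∈ℤ} c_n e^{inθ} and c₀ = 0, and let F = −u·u″ − H(u·H(u″)). Then for every θ ∈ S¹, F(θ) = 2 Σ_{n=1}^∞ (2n−1) |φ_n(θ)|², where φ_n(θ) = Σ_{m=n}^∞ c_m e^{imθ}. -/

import Mathlib

open MeasureTheory Real

/-- The `n`-th Fourier coefficient of a `2π`-periodic function `f : ℝ → ℝ`. -/
noncomputable def fourierC (f : ℝ → ℝ) (n : ℤ) : ℂ :=
  (1 / (2 * π)) * ∫ θ in (0:ℝ)..(2 * π), (f θ : ℂ) * Complex.exp (-Complex.I * (n : ℂ) * (θ : ℂ))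

/-- The Hilbert transform on the circle, sending `Σ cₙ e^{inθ}` to `Σ (−i sgn n) cₙ e^{inθ}`. -/
noncomputable def hilbertT (f : ℝ → ℝ) (θ : ℝ) : ℝ :=
  (∑' n : ℤ, -Complex.I * ((n.sign : ℤ) : ℂ) * fourierC f n *
    Complex.exp (Complex.I * (n : ℂ) * (θ : ℂ))).re

/-- The function `F = −u·u″ − H(u·H(u″))`. -/
noncomputable def Fmagic (u : ℝ → ℝ) (θ : ℝ) : ℝ :=
  -(u θ * deriv (deriv u) θ) - hilbertT (fun x => u x * hilbertT (deriv (deriv u)) x) θ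

open scoped ComplexConjugate

/-!
Put `yₙ = cₙ e^{inθ}`, so that `y₋ₙ` is the conjugate of `yₙ`. Multiplying the Fourier series gives
`F(θ) = ∑ n² (1 - sgn (m + n) sgn n) yₘ yₙ` over `(m, n) ∈ ℤ²`. The coefficient vanishes unless `m`
and `n` have strictly opposite signs, and for `m, n > 0` the pairs `(m, -n)` and `(-n, m)` together
contribute `2 min(m, n)² yₘ conj(yₙ)`. Since `min(m, n)²` is the sum of the odd numbers `2k - 1`
with `1 ≤ k ≤ min(m, n)`, exchanging the summations leaves, for each `k`, the product of the tail
`φₖ = ∑_{m ≥ k} yₘ` with its conjugate. Absolute convergence of the series of `u″` suffices; for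
smooth `u` it follows from Parseval's identity.
-/

section Sequences

variable {R : Type*}

theorem sum_range_two_mul_add_one [CommSemiring R] (N : ℕ) :
    ∑ n ∈ Finset.range N, (2 * (n : R) + 1) = (N : R) ^ 2 := by
  induction N with
  | zero => simp
  | succ N ih => rw [Finset.sum_range_succ, ih]; push_cast; ring

theorem hasSum_opposite_quadrants {M : Type*} [AddCommMonoid M] [TopologicalSpace M]
    [ContinuousAdd M] [RegularSpace M] {T : ℤ × ℤ → M} {s : M} (hT : HasSum T s)
    (hsupp : ∀ p, 0 ≤ p.1 * p.2 → T p = 0) :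
    HasSum (fun p : ℕ × ℕ => T (p.1 + 1, -(p.2 + 1)) + T (-(p.2 + 1), p.1 + 1)) s := by
  let e : (ℕ × ℕ) × Bool → ℤ × ℤ := fun z =>
    bif z.2 then (z.1.1 + 1, -(z.1.2 + 1)) else (-(z.1.2 + 1), z.1.1 + 1)
  have he_inj : Function.Injective e := by
    rintro ⟨⟨p, q⟩, _ | _⟩ ⟨⟨p', q'⟩, _ | _⟩ h <;>
      simp only [e, cond_true, cond_false, Prod.mk.injEq, and_true, reduceCtorEq, and_false] at h ⊢
      <;> omega
  have he_range : ∀ p ∉ Set.range e, T p = 0 := by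
    rintro ⟨m, n⟩ hmn
    refine hsupp _ (le_of_not_gt fun hneg => hmn ?_)
    rcases mul_neg_iff.1 hneg with ⟨hm, hn⟩ | ⟨hm, hn⟩
    · exact ⟨(((m - 1).toNat, (-n - 1).toNat), true), by ext <;> simp [e] <;> omega⟩
    · exact ⟨(((n - 1).toNat, (-m - 1).toNat), false), by ext <;> simp [e] <;> omega⟩
  refine ((he_inj.hasSum_iff he_range).2 hT).prod_fiberwise fun p => ?_
  simpa [e] using hasSum_fintype fun b => T (e (p, b))

theorem hasSum_indicator_Ici [AddCommGroup R] [UniformSpace R] [IsUniformAddGroup R]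
    [CompleteSpace R] {x : ℕ → R} (hx : Summable x) (n : ℕ) :
    HasSum ((Set.Ici n).indicator x) (∑' m, x (n + m)) := by
  have hinj : Function.Injective (n + · : ℕ → ℕ) := add_right_injective n
  have hsupp : ∀ p ∉ Set.range (n + · : ℕ → ℕ), (Set.Ici n).indicator x p = 0 := fun p hp =>
    Set.indicator_of_notMem (fun hnp : n ≤ p => hp ⟨p - n, Nat.add_sub_of_le hnp⟩) x
  rw [← hinj.hasSum_iff hsupp]
  simpa [Function.comp_def] using (hx.comp_injective hinj).hasSum

theorem hasSum_mul_indicator_Ici [Semiring R] [TopologicalSpace R] (w x y : ℕ → R) (p q : ℕ) :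
    HasSum (fun n => w n * ((Set.Ici n).indicator x p * (Set.Ici n).indicator y q))
      ((∑ n ∈ Finset.range (min p q + 1), w n) * (x p * y q)) := by
  have hterm : ∀ n ∈ Finset.range (min p q + 1),
      w n * ((Set.Ici n).indicator x p * (Set.Ici n).indicator y q) = w n * (x p * y q) := by
    intro n hn
    have hn : n ≤ p ∧ n ≤ q := by simpa [Nat.lt_succ_iff] using hn
    rw [Set.indicator_of_mem (Set.mem_Ici.2 hn.1), Set.indicator_of_mem (Set.mem_Ici.2 hn.2)]
  rw [Finset.sum_mul, ← Finset.sum_congr rfl hterm]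
  refine hasSum_sum_of_ne_finset_zero fun n hn => ?_
  by_cases hp : n ≤ p
  · have hq : ¬ n ≤ q := fun hq => hn (by simp [hp, hq])
    simp [hq]
  · simp [hp]

variable [NormedRing R] {w x y : ℕ → R}

theorem summable_mul_indicator_Ici (hy : Summable fun q => ‖y q‖)
    (hwx : Summable fun p => (∑ n ∈ Finset.range (p + 1), ‖w n‖) * ‖x p‖) :
    Summable fun z : (ℕ × ℕ) × ℕ => ‖w z.2‖ *
      ((Set.Ici z.2).indicator (‖x ·‖) z.1.1 * (Set.Ici z.2).indicator (‖y ·‖) z.1.2) := by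
  have hnonneg : ∀ (v : ℕ → R) (n p : ℕ), 0 ≤ (Set.Ici n).indicator (‖v ·‖) p :=
    fun v n p => Set.indicator_nonneg (fun _ _ => norm_nonneg _) p
  have hcol := fun p : ℕ × ℕ => hasSum_mul_indicator_Ici (‖w ·‖) (‖x ·‖) (‖y ·‖) p.1 p.2
  rw [summable_prod_of_nonneg fun z =>
    mul_nonneg (norm_nonneg _) (mul_nonneg (hnonneg x _ _) (hnonneg y _ _))]
  refine ⟨fun p => (hcol p).summable, ?_⟩
  simp only [fun p => (hcol p).tsum_eq]
  refine .of_nonneg_of_le (fun p => by positivity) (fun p => ?_)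
    (hwx.mul_of_nonneg hy (fun p => by positivity) fun q => norm_nonneg _)
  rw [← mul_assoc]
  gcongr
  exact min_le_left _ _

-- In the double series on the right, `x p * y q` is weighted by `w n` exactly when `n ≤ min p q`;
-- exchange the summations.
theorem hasSum_sum_range_min_mul [CompleteSpace R] (hx : Summable fun p => ‖x p‖)
    (hy : Summable fun q => ‖y q‖)
    (hwx : Summable fun p => (∑ n ∈ Finset.range (p + 1), ‖w n‖) * ‖x p‖) :
    HasSum (fun p : ℕ × ℕ => (∑ n ∈ Finset.range (min p.1 p.2 + 1), w n) * (x p.1 * y p.2))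
      (∑' n, w n * ((∑' m, x (n + m)) * ∑' m, y (n + m))) := by
  have hG : Summable fun z : (ℕ × ℕ) × ℕ => w z.2 *
      ((Set.Ici z.2).indicator x z.1.1 * (Set.Ici z.2).indicator y z.1.2) := by
    refine .of_norm_bounded (summable_mul_indicator_Ici hy hwx) fun z => ?_
    simp only [← norm_indicator_eq_indicator_norm]
    exact (norm_mul_le _ _).trans (by gcongr; exact norm_mul_le _ _)
  have hrow : ∀ n, HasSum (fun p : ℕ × ℕ =>
      w n * ((Set.Ici n).indicator x p.1 * (Set.Ici n).indicator y p.2))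
      (w n * ((∑' m, x (n + m)) * ∑' m, y (n + m))) := fun n =>
    .mul_left _ <| (hasSum_indicator_Ici hx.of_norm n).mul (hasSum_indicator_Ici hy.of_norm n) <|
      summable_mul_of_summable_norm
        (by simpa [norm_indicator_eq_indicator_norm] using hx.indicator _)
        (by simpa [norm_indicator_eq_indicator_norm] using hy.indicator _)
  have hcol := hG.hasSum.prod_fiberwise fun p => hasSum_mul_indicator_Ici w x y p.1 p.2
  have hswap := (hG.prod_symm.hasSum.prod_fiberwise hrow).tsum_eq
  rwa [hswap, ← (Equiv.prodComm _ _).tsum_eq]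

theorem hasSum_min_sq_mul_conj {x : ℕ → ℂ}
    (hx : Summable fun p => ((p + 1 : ℕ) : ℝ) ^ 2 * ‖x p‖) :
    HasSum (fun p : ℕ × ℕ => ((min p.1 p.2 + 1 : ℕ) : ℂ) ^ 2 * (x p.1 * conj (x p.2)))
      ((∑' n : ℕ, (2 * (n : ℝ) + 1) * ‖∑' m, x (n + m)‖ ^ 2 : ℝ) : ℂ) := by
  have hx_norm : Summable fun p => ‖x p‖ :=
    .of_nonneg_of_le (fun p => norm_nonneg _)
      (fun p => le_mul_of_one_le_left (norm_nonneg _) (one_le_pow₀ (by simp))) hx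
  have hw : ∀ n : ℕ, ‖2 * (n : ℂ) + 1‖ = 2 * (n : ℝ) + 1 := fun n => by
    exact_mod_cast Complex.norm_natCast (2 * n + 1)
  have hparts := hasSum_sum_range_min_mul (w := fun n => 2 * (n : ℂ) + 1) hx_norm
    (y := fun q => conj (x q)) (by simpa only [RCLike.norm_conj] using hx_norm)
    (by simpa only [hw, sum_range_two_mul_add_one] using hx)
  simp only [sum_range_two_mul_add_one, ← Complex.conj_tsum, Complex.mul_conj'] at hparts
  exact_mod_cast hparts

end Sequences

section Symbol

/-- The symbol of the bilinear operator `(u, v) ↦ -u v″ - H (u · H v″)`, i.e. the coefficient of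
`e^{i(m+n)θ}` in its value at `(e^{imθ}, e^{inθ})`. -/
def magicSymbol (m n : ℤ) : ℤ := n ^ 2 * (1 - (m + n).sign * n.sign)

theorem magicSymbol_eq_zero {m n : ℤ} (h : 0 ≤ m * n) : magicSymbol m n = 0 := by
  rw [magicSymbol]
  rcases lt_trichotomy n 0 with hn | rfl | hn
  · have hm : m ≤ 0 := nonpos_of_mul_nonneg_left h hn
    rw [Int.sign_eq_neg_one_of_neg hn, Int.sign_eq_neg_one_of_neg (by omega)]
    ring
  · ring
  · have hm : 0 ≤ m := nonneg_of_mul_nonneg_left h hn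
    rw [Int.sign_eq_one_of_pos hn, Int.sign_eq_one_of_pos (by omega)]
    ring

theorem magicSymbol_neg_add_magicSymbol_neg {m n : ℤ} (hm : 0 < m) (hn : 0 < n) :
    magicSymbol m (-n) + magicSymbol (-n) m = 2 * min m n ^ 2 := by
  rw [magicSymbol, magicSymbol, add_comm (-n) m, ← sub_eq_add_neg, Int.sign_neg,
    Int.sign_eq_one_of_pos hm, Int.sign_eq_one_of_pos hn]
  rcases lt_trichotomy m n with h | rfl | h
  · rw [min_eq_left h.le, Int.sign_eq_neg_one_of_neg (by omega)]
    ring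
  · rw [min_self, sub_self, Int.sign_zero]
    ring
  · rw [min_eq_right h.le, Int.sign_eq_one_of_pos (by omega)]
    ring

end Symbol

section FourierSeries

local notation "𝕋" => AddCircle (2 * π)

local instance : Fact (0 < 2 * π) := ⟨two_pi_pos⟩

theorem norm_fourier_apply {T : ℝ} (n : ℤ) (x : AddCircle T) : ‖fourier n x‖ = 1 :=
  Circle.norm_coe _

theorem fourier_two_pi_eq_exp (n : ℤ) (θ : ℝ) :
    fourier n (θ : 𝕋) = Complex.exp (Complex.I * n * θ) := by
  rw [fourier_coe_apply]
  congr 1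
  push_cast
  field_simp [show (π : ℂ) ≠ 0 from mod_cast pi_ne_zero]

variable {f : ℝ → ℝ}

theorem fourierC_eq_integral_fourier (f : ℝ → ℝ) (n : ℤ) :
    fourierC f n = (1 / (2 * π)) * ∫ θ in (0 : ℝ)..(2 * π), fourier (-n) (θ : 𝕋) * (f θ : ℂ) := by
  simp only [fourierC, fourier_two_pi_eq_exp, mul_comm (f _ : ℂ), Int.cast_neg, mul_neg, neg_mul]

theorem fourierC_neg (f : ℝ → ℝ) (n : ℤ) : fourierC f (-n) = conj (fourierC f n) := by
  simp only [fourierC_eq_integral_fourier, map_mul, ← intervalIntegral.intervalIntegral_conj,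
    ← fourier_neg, Complex.conj_ofReal, map_div₀, map_one, map_ofNat]

theorem fourierC_eq_fourierCoeffOn (f : ℝ → ℝ) (n : ℤ) :
    fourierC f n = fourierCoeffOn two_pi_pos (fun θ => (f θ : ℂ)) n := by
  rw [fourierC_eq_integral_fourier, fourierCoeffOn_eq_integral, Complex.real_smul, sub_zero]
  push_cast
  rfl

theorem summable_sq_norm_fourierC (hf : Continuous f) :
    Summable fun n => ‖fourierC f n‖ ^ 2 := by
  have hL2 : MemLp (fun θ => (f θ : ℂ)) 2 (volume.restrict (Set.Ioc 0 (2 * π))) :=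
    (memLp_two_iff_integrable_sq_norm (by fun_prop)).2 <|
      Continuous.integrableOn_Ioc (by fun_prop)
  simpa only [fourierC_eq_fourierCoeffOn] using (hasSum_sq_fourierCoeffOn two_pi_pos hL2).summable

theorem fourierC_deriv (hf : ContDiff ℝ 1 f) (hper : Function.Periodic f (2 * π)) (n : ℤ) :
    fourierC (deriv f) n = Complex.I * n * fourierC f n := by
  have hmode : ∀ θ : ℝ, HasDerivAt (fun θ : ℝ => fourier (-n) (θ : 𝕋))
      (-Complex.I * n * fourier (-n) (θ : 𝕋)) θ := by
    intro θ
    convert hasDerivAt_fourier_neg (2 * π) n θ using 2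
    push_cast
    field_simp [show (π : ℂ) ≠ 0 from mod_cast pi_ne_zero]
  have hparts := intervalIntegral.integral_mul_deriv_eq_deriv_mul (a := 0) (b := 2 * π)
    (fun θ _ => hmode θ) (fun θ _ => (hf.differentiable_one θ).hasDerivAt.ofReal_comp)
    (Continuous.intervalIntegrable (by fun_prop) _ _)
    ((Complex.continuous_ofReal.comp hf.continuous_deriv_one).intervalIntegrable _ _)
  have hends : fourier (-n) ((2 * π : ℝ) : 𝕋) * (f (2 * π) : ℂ) =
      fourier (-n) ((0 : ℝ) : 𝕋) * (f 0 : ℂ) := by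
    rw [AddCircle.coe_period, AddCircle.coe_zero, hper.eq]
  rw [fourierC_eq_integral_fourier, fourierC_eq_integral_fourier, hparts, hends, sub_self, zero_sub]
  simp only [mul_assoc, intervalIntegral.integral_const_mul]
  ring

theorem periodic_deriv {E : Type*} [NormedAddCommGroup E] [NormedSpace ℝ E] {g : ℝ → E} {T : ℝ}
    (hg : Function.Periodic g T) : Function.Periodic (deriv g) T := fun θ => by
  rw [← deriv_comp_add_const, hg.funext]

theorem fourierC_deriv_deriv (hf : ContDiff ℝ 2 f) (hper : Function.Periodic f (2 * π)) (n : ℤ) :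
    fourierC (deriv (deriv f)) n = -(n : ℂ) ^ 2 * fourierC f n := by
  rw [fourierC_deriv hf.deriv' (periodic_deriv hper),
    fourierC_deriv (hf.of_le one_le_two) hper]
  linear_combination (n : ℂ) ^ 2 * fourierC f n * Complex.I_sq

theorem summable_fourierC_of_contDiff (hf : ContDiff ℝ 1 f) (hper : Function.Periodic f (2 * π)) :
    Summable (fourierC f) := by
  -- AM-GM: `2 ‖cₙ‖ ≤ n⁻² + ‖n cₙ‖²`, and the second terms are summable by Parseval.
  have hbound : ∀ n : ℤ, n ≠ 0 →
      ‖fourierC f n‖ ≤ 1 / (n : ℝ) ^ 2 + ‖fourierC (deriv f) n‖ ^ 2 := by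
    intro n hn
    have hn : 0 < |(n : ℝ)| := by positivity
    have hprod : ‖fourierC f n‖ = |(n : ℝ)|⁻¹ * ‖fourierC (deriv f) n‖ := by
      rw [fourierC_deriv hf hper]
      simp [hn.ne']
    rw [hprod, one_div, ← sq_abs (n : ℝ), ← inv_pow]
    nlinarith [sq_nonneg (|(n : ℝ)|⁻¹ - ‖fourierC (deriv f) n‖), sq_nonneg (|(n : ℝ)|⁻¹),
      sq_nonneg ‖fourierC (deriv f) n‖]
  exact ((summable_one_div_int_pow.2 one_lt_two).add
    (summable_sq_norm_fourierC hf.continuous_deriv_one)).of_norm_bounded_eventually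
    ((Set.finite_singleton (0 : ℤ)).subset fun n hn => by_contra fun h => hn (hbound n h))

theorem hasSum_fourierC_mul_fourier (hf : Continuous f) (hper : Function.Periodic f (2 * π))
    (hsum : Summable (fourierC f)) (θ : ℝ) :
    HasSum (fun n => fourierC f n * fourier n (θ : 𝕋)) (f θ : ℂ) := by
  have hper_ofReal : Function.Periodic (fun θ => (f θ : ℂ)) (2 * π) := hper.comp Complex.ofReal
  let F : C(𝕋, ℂ) :=
    ⟨hper_ofReal.lift, continuous_coinduced_dom.2 (Complex.continuous_ofReal.comp hf)⟩
  have hcoeff : fourierCoeff F = fourierC f := by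
    ext n
    rw [fourierCoeff_eq_intervalIntegral _ _ 0, fourierC_eq_integral_fourier, Complex.real_smul,
      zero_add]
    push_cast
    rfl
  have hF := has_pointwise_sum_fourier_series_of_summable (hcoeff ▸ hsum) (θ : 𝕋)
  rwa [hcoeff] at hF

variable {ι : Type*} {a : ι → ℂ} {k : ι → ℤ}

theorem integral_fourier_neg_mul_fourier (m n : ℤ) :
    (1 / (2 * π) : ℂ) * ∫ θ in (0 : ℝ)..(2 * π), fourier (-n) (θ : 𝕋) * fourier m (θ : 𝕋) =
      Pi.single (M := fun _ => ℂ) m 1 n := by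
  rw [← fourierCoeff_fourier (T := 2 * π) m, fourierCoeff_eq_intervalIntegral _ _ 0,
    Complex.real_smul, zero_add]
  push_cast
  rfl

theorem fourierC_eq_tsum_preimage [Countable ι] (ha : Summable a)
    (hf : ∀ θ : ℝ, HasSum (fun i => a i * fourier (k i) (θ : 𝕋)) (f θ : ℂ)) (n : ℤ) :
    fourierC f n = ∑' i : k ⁻¹' {n}, a i := by
  have hint := intervalIntegral.hasSum_integral_of_dominated_convergence
    (μ := volume) (a := 0) (b := 2 * π)
    (F := fun i (θ : ℝ) => fourier (-n) (θ : 𝕋) * (a i * fourier (k i) (θ : 𝕋)))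
    (fun i _ => ‖a i‖)
    (fun i => Continuous.aestronglyMeasurable (by fun_prop))
    (fun i => .of_forall fun θ _ => by
      simp only [norm_mul, norm_fourier_apply, one_mul, mul_one, le_refl])
    (.of_forall fun θ _ => ha.norm)
    intervalIntegrable_const
    (.of_forall fun θ _ => (hf θ).mul_left _)
  have hterm : ∀ i, (1 / (2 * π) : ℂ) * ∫ θ in (0 : ℝ)..(2 * π),
      fourier (-n) (θ : 𝕋) * (a i * fourier (k i) (θ : 𝕋)) = (k ⁻¹' {n}).indicator a i := by
    intro i
    simp only [mul_left_comm _ (a i), intervalIntegral.integral_const_mul,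
      integral_fourier_neg_mul_fourier]
    by_cases h : k i = n
    · simp [h]
    · simp [h, Ne.symm h]
  rw [fourierC_eq_integral_fourier, tsum_subtype, ← (hint.mul_left (1 / (2 * π) : ℂ)).tsum_eq]
  exact tsum_congr hterm

theorem summable_mul_fourier (ha : Summable a) (k : ι → ℤ) {T : ℝ} (x : AddCircle T) :
    Summable fun i => a i * fourier (k i) x :=
  .of_norm <| by simpa only [norm_mul, norm_fourier_apply, mul_one] using ha.norm

theorem hasSum_mul_fourier {κ : Type*} {b : κ → ℂ} {l : κ → ℤ} {g : ℝ → ℝ}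
    (ha : Summable a) (hb : Summable b)
    (hf : ∀ θ : ℝ, HasSum (fun i => a i * fourier (k i) (θ : 𝕋)) (f θ : ℂ))
    (hg : ∀ θ : ℝ, HasSum (fun j => b j * fourier (l j) (θ : 𝕋)) (g θ : ℂ)) (θ : ℝ) :
    HasSum (fun p : ι × κ => a p.1 * b p.2 * fourier (k p.1 + l p.2) (θ : 𝕋))
      ((f θ * g θ : ℝ) : ℂ) := by
  have hsum := summable_mul_of_summable_norm (summable_mul_fourier ha k (θ : 𝕋)).norm
    (summable_mul_fourier hb l (θ : 𝕋)).norm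
  rw [Complex.ofReal_mul]
  convert! (hf θ).mul (hg θ) hsum using 2 with p
  rw [fourier_add]
  ring

theorem norm_intCast_sign_le_one (n : ℤ) : ‖(n.sign : ℂ)‖ ≤ 1 := by
  rcases lt_trichotomy n 0 with h | rfl | h <;>
    simp [*, Int.sign_eq_neg_one_of_neg, Int.sign_eq_one_of_pos]

theorem summable_neg_I_mul_sign_mul (ha : Summable a) (k : ι → ℤ) :
    Summable fun i => -Complex.I * (k i).sign * a i :=
  .of_norm_bounded ha.norm fun i => by
    simpa using mul_le_of_le_one_left (norm_nonneg (a i)) (norm_intCast_sign_le_one (k i))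

theorem conj_tsum_hilbertT (f : ℝ → ℝ) (θ : ℝ) :
    conj (∑' n : ℤ, -Complex.I * n.sign * fourierC f n * fourier n (θ : 𝕋)) =
      ∑' n : ℤ, -Complex.I * n.sign * fourierC f n * fourier n (θ : 𝕋) := by
  rw [Complex.conj_tsum, ← (Equiv.neg ℤ).tsum_eq]
  refine tsum_congr fun n => ?_
  simp [fourierC_neg, fourier_neg, -fourier_apply]

theorem ofReal_hilbertT (f : ℝ → ℝ) (θ : ℝ) :
    (hilbertT f θ : ℂ) =
      ∑' n : ℤ, -Complex.I * n.sign * fourierC f n * fourier n (θ : 𝕋) := by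
  rw [← Complex.conj_eq_iff_re.1 (conj_tsum_hilbertT f θ)]
  simp only [hilbertT, fourier_two_pi_eq_exp]

theorem hasSum_hilbertT [Countable ι] (ha : Summable a)
    (hf : ∀ θ : ℝ, HasSum (fun i => a i * fourier (k i) (θ : 𝕋)) (f θ : ℂ)) (θ : ℝ) :
    HasSum (fun i => -Complex.I * (k i).sign * a i * fourier (k i) (θ : 𝕋)) (hilbertT f θ : ℂ) := by
  have hsum : Summable fun i => -Complex.I * (k i).sign * a i * fourier (k i) (θ : 𝕋) :=
    summable_mul_fourier (summable_neg_I_mul_sign_mul ha k) k _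
  have hfiber : ∀ n, ∑' i : k ⁻¹' {n}, -Complex.I * (k i).sign * a i * fourier (k i) (θ : 𝕋) =
      -Complex.I * n.sign * fourierC f n * fourier n (θ : 𝕋) := by
    intro n
    rw [fourierC_eq_tsum_preimage ha hf, ← tsum_mul_left, ← tsum_mul_right]
    exact tsum_congr fun i => by rw [show k i = n from i.2]
  rw [ofReal_hilbertT, ← tsum_congr hfiber, (hsum.hasSum.tsum_fiberwise k).tsum_eq]
  exact hsum.hasSum

variable {u : ℝ → ℝ}

theorem hasSum_Fmagic (hu : ContDiff ℝ 2 u) (hper : Function.Periodic u (2 * π))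
    (hsum : Summable (fourierC (deriv (deriv u)))) (θ : ℝ) :
    HasSum (fun p : ℤ × ℤ => (magicSymbol p.1 p.2 : ℂ) *
      (fourierC u p.1 * fourier p.1 (θ : 𝕋) * (fourierC u p.2 * fourier p.2 (θ : 𝕋))))
      (Fmagic u θ : ℂ) := by
  have hc : Summable (fourierC u) := summable_fourierC_of_contDiff (hu.of_le one_le_two) hper
  have hu_series := hasSum_fourierC_mul_fourier hu.continuous hper hc
  have hu₂_series := hasSum_fourierC_mul_fourier hu.deriv'.continuous_deriv_one
    (periodic_deriv (periodic_deriv hper)) hsum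
  have hprod := hasSum_mul_fourier hc hsum hu_series hu₂_series θ
  have hH₂ := summable_neg_I_mul_sign_mul hsum id
  have hprodH := hasSum_mul_fourier hc hH₂ hu_series (hasSum_hilbertT hsum hu₂_series)
  have hHprodH := hasSum_hilbertT
    (summable_mul_of_summable_norm hc.norm hH₂.norm) hprodH θ
  rw [Fmagic, Complex.ofReal_sub, Complex.ofReal_neg]
  convert! hprod.neg.sub hHprodH using 2 with p
  simp only [fourierC_deriv_deriv hu hper, magicSymbol, fourier_add, id]
  push_cast
  linear_combination (-(p.2 : ℂ) ^ 2 * (p.1 + p.2).sign * p.2.sign * fourierC u p.1 *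
    fourierC u p.2 * fourier p.1 (θ : 𝕋) * fourier p.2 (θ : 𝕋)) * Complex.I_sq

theorem hasSum_Fmagic_min (hu : ContDiff ℝ 2 u) (hper : Function.Periodic u (2 * π))
    (hsum : Summable (fourierC (deriv (deriv u)))) (θ : ℝ) :
    HasSum (fun p : ℕ × ℕ => 2 * ((min p.1 p.2 + 1 : ℕ) : ℂ) ^ 2 *
      (fourierC u (p.1 + 1) * fourier (p.1 + 1) (θ : 𝕋) *
        conj (fourierC u (p.2 + 1) * fourier (p.2 + 1) (θ : 𝕋)))) (Fmagic u θ : ℂ) := by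
  convert! hasSum_opposite_quadrants (hasSum_Fmagic hu hper hsum θ) ?_ using 2 with p
  · have hmin : min (p.1 + 1 : ℤ) (p.2 + 1) = ((min p.1 p.2 + 1 : ℕ) : ℤ) := by
      rw [min_add_add_right, Nat.cast_add_one, Nat.cast_min]
    rw [mul_comm (fourierC u (-(p.2 + 1)) * _), ← add_mul, ← Int.cast_add,
      magicSymbol_neg_add_magicSymbol_neg (by positivity) (by positivity), hmin, map_mul,
      ← fourierC_neg, ← fourier_neg]
    simp only [Int.cast_mul, Int.cast_pow, Int.cast_natCast, Int.cast_ofNat]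
  · intro p hp
    rw [magicSymbol_eq_zero hp, Int.cast_zero, zero_mul]

theorem Fmagic_eq_tail_sum_general (hu : ContDiff ℝ 2 u) (hper : Function.Periodic u (2 * π))
    (hsum : Summable (fourierC (deriv (deriv u)))) (θ : ℝ) :
    Fmagic u θ = 2 * ∑' n : ℕ, (2 * ((n : ℝ) + 1) - 1) *
      ‖∑' m : ℕ, fourierC u ((n : ℤ) + 1 + (m : ℤ)) *
        Complex.exp (Complex.I * (((n : ℕ) + 1 + (m : ℕ) : ℕ) : ℂ) * (θ : ℂ))‖ ^ 2 := by
  let x : ℕ → ℂ := fun p => fourierC u (p + 1) * fourier (p + 1) (θ : 𝕋)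
  have hx : Summable fun p => ((p + 1 : ℕ) : ℝ) ^ 2 * ‖x p‖ := by
    have hinj : Function.Injective fun p : ℕ => (p + 1 : ℤ) := fun p q h => by simpa using h
    refine (hsum.norm.comp_injective hinj).congr fun p => ?_
    simp only [x, Function.comp_apply, fourierC_deriv_deriv hu hper, norm_mul, norm_neg, norm_pow,
      norm_fourier_apply, mul_one, Complex.norm_intCast, sq_abs]
    push_cast
    rfl
  have htail : ∀ n m : ℕ, x (n + m) = fourierC u ((n : ℤ) + 1 + (m : ℤ)) *
      Complex.exp (Complex.I * (((n : ℕ) + 1 + (m : ℕ) : ℕ) : ℂ) * (θ : ℂ)) := by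
    intro n m
    simp only [x, fourier_two_pi_eq_exp]
    push_cast
    simp only [add_right_comm]
  have hF := hasSum_Fmagic_min hu hper hsum θ
  simp only [mul_assoc (2 : ℂ)] at hF
  have hF_tail := hF.unique ((hasSum_min_sq_mul_conj hx).mul_left 2)
  simp only [← htail, show ∀ n : ℕ, 2 * ((n : ℝ) + 1) - 1 = 2 * n + 1 from fun n => by ring]
  exact_mod_cast hF_tail

end FourierSeries

/-- For smooth mean-zero `u` with Fourier coefficients `cₙ`,
`F(θ) = 2 Σ_{n≥1} (2n−1) |φ_n(θ)|²` where `φ_n(θ) = Σ_{m≥n} c_m e^{imθ}`. -/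
theorem Fmagic_eq_tail_sum (u : ℝ → ℝ)
    (hu : ContDiff ℝ (⊤ : ℕ∞) u)
    (hper : ∀ θ : ℝ, u (θ + 2 * π) = u θ)
    (hmean : fourierC u 0 = 0) :
    ∀ θ : ℝ, Fmagic u θ =
      2 * ∑' n : ℕ, (2 * ((n : ℝ) + 1) - 1) *
        ‖∑' m : ℕ, fourierC u ((n : ℤ) + 1 + (m : ℤ)) *
          Complex.exp (Complex.I * (((n : ℕ) + 1 + (m : ℕ) : ℕ) : ℂ) * (θ : ℂ))‖ ^ 2 :=
  Fmagic_eq_tail_sum_general (contDiff_infty.1 hu 2) hper <|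
    summable_fourierC_of_contDiff (contDiff_infty.1 (hu.iterate_deriv 2) 1)
      (periodic_deriv (periodic_deriv hper))
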